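/- Let 0 < a and let α : ℝ → [a,2] be Lebesgue measurable. Then there exists a probability space (Ω, 𝔉, ℙ) and a family of real random variables {I(f) : f ∈ F_α} on it such that for every d ∈ ℕ, every f₁,…,f_d ∈ F_α and every (θ₁,…,θ_d) ∈ ℝ^d, 𝔼[ exp( i Σ_{j=1}^d θ_j I(f_j) ) ] = exp( − ∫_ℝ |Σ_{j=1}^d θ_j f_j(x)|^{α(x)} dx ). -/

import Mathlib

/-!
The finite-dimensional laws are constructed first, and then glued together by Kolmogorov's extension
theorem.

*Finite-dimensional laws.* For `F = (f₁, …, f_d)` one has to show that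
`exp (-∫ |⟪F x, t⟫|^α(x) dx)` is the characteristic function of a probability measure on `ℝ^d`.
This is split according to `{α < 2}` and `{α = 2}`, the two factors being combined by convolution.
* Where `α < 2`, write `|u|^p = C(p)⁻¹ ∫₀^∞ (1 - cos (s u)) s^{-1-p} ds` with
  `C(p) = ∫₀^∞ (1 - cos s) s^{-1-p} ds ∈ (0, ∞)`. The exponent becomes
  `∫ (1 - cos ⟪G, t⟫) dκ` with `G (x, s) = s F(x)` and a `σ`-finite `κ` (`isCharFun_stable`).
* Where `α = 2`, the integrand is the limit of
  `2 (k + 1)² (1 - cos (⟪F x, t⟫ / (k + 1)))`, which again has the form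
  `∫ (1 - cos ⟪G, t⟫) dκ` (`isCharFun_gaussian`).

Exponents of this form are handled by `isCharFun_sigmaFinite`: for finite `κ` they belong to
symmetric compound Poisson laws (`isCharFun_poisson`), obtained from `(1 + z / n)^n → e^z`, and a
`σ`-finite `κ` is exhausted by finite measures. All the limits are instances of Lévy's continuity theorem
(`IsCharFun.of_tendsto`), which is deduced from tightness and Prokhorov's theorem.

*Extension.* The laws are consistent because a finite measure on `ℝ^d` is determined by its
characteristic function. The process is the coordinate process on `ℝ^{F_α}`, whose law is given by
`exists_isProjectiveLimit_real`: the content on cylinders is continuous at `∅`, by inner regularity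
of the finite-dimensional laws and a compactness argument (`tendsto_projectiveFamilyContent_zero`).
-/

open MeasureTheory Filter Set Topology ProbabilityTheory BoundedContinuousFunction

noncomputable section

/-- Membership in `F_α`: `f` is measurable and either a.e. zero or there is a (unique)
`λ > 0` with `∫ |f(x)/λ|^{α(x)} dx = 1`. -/
def MemFalpha (α f : ℝ → ℝ) : Prop :=
  Measurable f ∧ (f =ᵐ[volume] (0 : ℝ → ℝ) ∨ ∃ lam > (0:ℝ), ∫ x : ℝ, |f x / lam| ^ α x = 1)

/-- The quasinorm `‖f‖_α`, the unique `λ > 0` with `∫ |f(x)/λ|^{α(x)} dx = 1`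
(and `0` if no such `λ` exists, e.g. if `f = 0` a.e.). -/
def alphaNorm (α f : ℝ → ℝ) : ℝ :=
  sInf {lam : ℝ | 0 < lam ∧ ∫ x : ℝ, |f x / lam| ^ α x = 1}

/-- `|s|^{a,b} = max{|s|^a, |s|^b}`. -/
def pab (a b s : ℝ) : ℝ := max (|s| ^ a) (|s| ^ b)

/-- Membership in `F_{a,b}`: measurable with `∫ |f(x)|^{a,b} dx < ∞`. -/
def MemFab (a b : ℝ) (f : ℝ → ℝ) : Prop :=
  Measurable f ∧ Integrable (fun x : ℝ => pab a b (f x))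

/-- The norm `‖f‖_p = (∫ |f(x)|^p dx)^{1/p}`. -/
def pNorm (p : ℝ) (f : ℝ → ℝ) : ℝ := (∫ x : ℝ, |f x| ^ p) ^ (1 / p)

/-- Membership in `E₀`: Lebesgue measurable with finite Lebesgue measure. -/
def MemE0 (A : Set ℝ) : Prop := MeasurableSet A ∧ volume A < ⊤

/-! ### Characteristic functions of probability measures -/

/-- `φ` is the characteristic function of a probability measure on `E`. -/
def IsCharFun {E : Type*} [NormedAddCommGroup E] [InnerProductSpace ℝ E] [MeasurableSpace E]
    (φ : E → ℂ) : Prop :=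
  ∃ μ : Measure E, IsProbabilityMeasure μ ∧ ∀ t, charFun μ t = φ t

section CharFun

variable {E : Type*} [NormedAddCommGroup E] [InnerProductSpace ℝ E] [FiniteDimensional ℝ E]
  [MeasurableSpace E] [BorelSpace E]

lemma IsCharFun.mul {φ ψ : E → ℂ} (hφ : IsCharFun φ) (hψ : IsCharFun ψ) :
    IsCharFun (fun t => φ t * ψ t) := by
  obtain ⟨μ, hμ, h1⟩ := hφ
  obtain ⟨ν, hν, h2⟩ := hψ
  refine ⟨μ ∗ ν, inferInstance, fun t => ?_⟩
  rw [charFun_conv, h1, h2]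

lemma IsCharFun.pow {φ : E → ℂ} (hφ : IsCharFun φ) (n : ℕ) :
    IsCharFun (fun t => φ t ^ n) := by
  induction n with
  | zero => exact ⟨Measure.dirac 0, inferInstance, fun t => by simp [charFun_dirac]⟩
  | succ n ih => simpa only [pow_succ] using ih.mul hφ

/-- Lévy's continuity theorem, in the form that produces the limiting measure: tightness follows
from continuity at `0`, and Prokhorov's theorem gives a cluster point, whose characteristic
function must be the pointwise limit. -/
lemma IsCharFun.of_tendsto {φ : ℕ → E → ℂ} {ψ : E → ℂ} (hφ : ∀ n, IsCharFun (φ n))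
    (h : ∀ t, Tendsto (fun n => φ n t) atTop (𝓝 (ψ t))) (hψ : ContinuousAt ψ 0) :
    IsCharFun ψ := by
  choose μ hμ hμφ using hφ
  have htight : IsTightMeasureSet (Set.range μ) :=
    isTightMeasureSet_of_tendsto_charFun hψ (by simpa only [hμφ] using h)
  let P : ℕ → ProbabilityMeasure E := fun n => ⟨μ n, hμ n⟩
  have hset : {((ν : ProbabilityMeasure E) : Measure E) | ν ∈ Set.range P} = Set.range μ := by
    ext ν
    constructor
    · rintro ⟨_, ⟨n, rfl⟩, rfl⟩
      exact ⟨n, rfl⟩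
    · rintro ⟨n, rfl⟩
      exact ⟨P n, ⟨n, rfl⟩, rfl⟩
  have hcomp : IsCompact (closure (Set.range P)) :=
    isCompact_closure_of_isTightMeasureSet (by rw [hset]; exact htight)
  obtain ⟨ν, -, hν⟩ := hcomp.exists_mapClusterPt (f := atTop) (u := P)
    (tendsto_principal.2 (Eventually.of_forall fun n => subset_closure (mem_range_self n)))
  refine ⟨ν, inferInstance, fun t => ?_⟩
  have hcont : Continuous (fun ρ : ProbabilityMeasure E => charFun (ρ : Measure E) t) := by
    simp_rw [charFun_eq_integral_innerProbChar]
    rw [continuous_iff_continuousAt]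
    intro ρ
    exact (ProbabilityMeasure.tendsto_iff_forall_integral_rclike_tendsto ℂ).1 tendsto_id _
  have hcl : MapClusterPt (charFun (ν : Measure E) t) atTop (fun n => φ n t) := by
    have h1 := hν.continuousAt_comp hcont.continuousAt
    have h2 : (fun ρ : ProbabilityMeasure E => charFun (ρ : Measure E) t) ∘ P
        = fun n => φ n t := funext fun n => hμφ n t
    rwa [h2] at h1
  have hne : (𝓝 (charFun (ν : Measure E) t) ⊓ Filter.map (fun n => φ n t) atTop).NeBot := hcl
  exact eq_of_nhds_neBot (hne.mono (inf_le_inf_left _ (h t)))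

/-- The law of a symmetric compound Poisson variable with jump intensity `ν`, obtained as a limit
of `n`-fold convolutions of `(1 - m / n) δ₀ + ν' / n`, where `ν'` is the symmetrization of `ν` and
`m` its mass. -/
lemma isCharFun_poisson (ν : Measure E) [IsFiniteMeasure ν] :
    IsCharFun (fun t => ((Real.exp (-∫ y, (1 - Real.cos (inner ℝ y t)) ∂ν) : ℝ) : ℂ)) := by
  -- the factor `1/2` compensates the two halves of the symmetrization
  let κ : Measure E := (2⁻¹ : NNReal) • (ν + ν.map (fun y => (-1 : ℝ) • y))
  have : IsFiniteMeasure κ := by unfold κ; infer_instance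
  have hcos : ∀ t, Integrable (fun y => Real.cos (inner ℝ y t)) ν := fun t =>
    (integrable_const (1 : ℝ)).mono' (by fun_prop)
      (Eventually.of_forall fun y => by simpa using Real.abs_cos_le_one _)
  have hκ : ∀ t, charFun κ t = ((∫ y, Real.cos (inner ℝ y t) ∂ν : ℝ) : ℂ) := by
    intro t
    have hint : ∀ (ρ : Measure E) [IsFiniteMeasure ρ],
        Integrable (fun y : E => Complex.exp ((inner ℝ y t : ℝ) * Complex.I)) ρ := fun ρ _ =>
      (integrable_const (1 : ℝ)).mono' (by fun_prop)
        (Eventually.of_forall fun y => by simp [Complex.norm_exp_ofReal_mul_I])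
    have e1 : charFun κ t = 2⁻¹ * (charFun ν t + charFun ν (-t)) := by
      have := charFun_map_smul (μ := ν) (-1 : ℝ) t
      rw [neg_one_smul ℝ t] at this
      rw [← this]
      simp only [charFun_apply, κ]
      rw [integral_smul_nnreal_measure, integral_add_measure (hint _) (hint _)]
      rw [NNReal.smul_def]
      simp [mul_add]
    rw [e1, charFun_neg, Complex.add_conj, charFun_apply]
    have : (∫ y, Complex.exp ((inner ℝ y t : ℝ) * Complex.I) ∂ν).re
        = ∫ y, Real.cos (inner ℝ y t) ∂ν := by
      rw [← RCLike.re_eq_complex_re, ← integral_re (hint ν)]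
      simp [Complex.exp_ofReal_mul_I_re]
    rw [this]
    push_cast
    ring
  have hκm : κ.real univ = ν.real univ := by
    have := hκ 0
    simp only [charFun_zero, inner_zero_right, Real.cos_zero, integral_const, smul_eq_mul,
      mul_one] at this
    exact_mod_cast this
  obtain ⟨N, hN⟩ := exists_nat_gt (κ.real univ)
  set m := κ.real univ with hm
  have hm0 : 0 ≤ m := measureReal_nonneg
  have hNpos : (0 : ℝ) < N := hm0.trans_lt hN
  refine IsCharFun.of_tendsto
    (φ := fun n t => (1 + (charFun κ t - m) / ((n + N : ℕ) : ℂ)) ^ (n + N)) (fun n => ?_)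
    (fun t => ?_) ?_
  · refine IsCharFun.pow (φ := fun t => (1 + (charFun κ t - m) / ((n + N : ℕ) : ℂ))) ?_ _
    set k : ℝ := ((n + N : ℕ) : ℝ) with hk
    have hkN : (N : ℝ) ≤ k := by rw [hk]; push_cast; linarith [Nat.cast_nonneg (α := ℝ) n]
    have hk0 : 0 < k := by linarith
    have hc : 0 ≤ 1 - m / k := by rw [sub_nonneg, div_le_one hk0]; linarith
    have hfin : IsFiniteMeasure ((1 - m / k).toNNReal • (Measure.dirac (0 : E))
        + (k⁻¹).toNNReal • κ) := inferInstance
    have hchar : ∀ t, charFun ((1 - m / k).toNNReal • (Measure.dirac (0 : E))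
        + (k⁻¹).toNNReal • κ) t = 1 + (charFun κ t - m) / ((n + N : ℕ) : ℂ) := by
      intro t
      have hint : ∀ (ρ : Measure E) [IsFiniteMeasure ρ],
          Integrable (fun y : E => Complex.exp ((inner ℝ y t : ℝ) * Complex.I)) ρ := fun ρ _ =>
        (integrable_const (1 : ℝ)).mono' (by fun_prop)
          (Eventually.of_forall fun y => by simp [Complex.norm_exp_ofReal_mul_I])
      simp only [charFun_apply]
      rw [integral_add_measure (hint _) (hint _), integral_smul_nnreal_measure,
        integral_smul_nnreal_measure, integral_dirac]
      rw [NNReal.smul_def, NNReal.smul_def, Real.coe_toNNReal _ hc,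
        Real.coe_toNNReal _ (by positivity)]
      have : ((n + N : ℕ) : ℂ) = (k : ℂ) := by rw [hk]; push_cast; rfl
      rw [this]
      simp
      ring
    refine ⟨_, ⟨?_⟩, hchar⟩
    have h0 := hchar 0
    rw [charFun_zero, charFun_zero, ← hm, sub_self, zero_div, add_zero] at h0
    have h1 : ((1 - m / k).toNNReal • (Measure.dirac (0 : E)) + (k⁻¹).toNNReal • κ).real univ
      = 1 := by exact_mod_cast h0
    rw [← ENNReal.ofReal_toReal (measure_ne_top _ univ)]
    change ENNReal.ofReal (Measure.real _ univ) = 1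
    rw [h1]; simp
  · have := (Complex.tendsto_one_add_div_pow_exp (charFun κ t - m)).comp (tendsto_add_atTop_nat N)
    simp only [Function.comp_def] at this
    convert this using 2
    rw [integral_sub (integrable_const _) (hcos t), hκ, hκm]
    push_cast
    congr 1
    simp
  · have hc : Continuous (fun t => charFun κ t) := by fun_prop
    have e : (fun t => ((Real.exp (-∫ y, (1 - Real.cos (inner ℝ y t)) ∂ν) : ℝ) : ℂ))
        = fun t => Complex.exp (charFun κ t - m) := by
      ext t
      rw [integral_sub (integrable_const _) (hcos t), hκ, hκm]
      push_cast
      congr 1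
      simp
    rw [e]
    exact (Complex.continuous_exp.comp (hc.sub continuous_const)).continuousAt

/-- If `κ` is `σ`-finite and `1 - cos ⟪G, t⟫` is `κ`-integrable for all `t`, then `κ` is an
admissible jump intensity: exhaust it by finite measures. -/
lemma isCharFun_sigmaFinite {X : Type*} [MeasurableSpace X] (κ : Measure X) [SigmaFinite κ]
    {G : X → E} (hG : Measurable G)
    (hint : ∀ t, Integrable (fun x => 1 - Real.cos (inner ℝ (G x) t)) κ)
    (hc : ContinuousAt (fun t => ∫ x, (1 - Real.cos (inner ℝ (G x) t)) ∂κ) 0) :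
    IsCharFun (fun t => ((Real.exp (-∫ x, (1 - Real.cos (inner ℝ (G x) t)) ∂κ) : ℝ) : ℂ)) := by
  refine IsCharFun.of_tendsto (φ := fun n t => ((Real.exp (-∫ x in spanningSets κ n,
    (1 - Real.cos (inner ℝ (G x) t)) ∂κ) : ℝ) : ℂ)) (fun n => ?_) (fun t => ?_) ?_
  · have : IsFiniteMeasure (κ.restrict (spanningSets κ n)) :=
      ⟨by simpa using measure_spanningSets_lt_top κ n⟩
    have h := isCharFun_poisson ((κ.restrict (spanningSets κ n)).map G)
    convert h using 5 with t
    rw [integral_map hG.aemeasurable (by fun_prop)]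
  · have h := tendsto_setIntegral_of_monotone (μ := κ) (measurableSet_spanningSets κ)
      (monotone_spanningSets κ) ((hint t).integrableOn (s := ⋃ n, spanningSets κ n))
    rw [iUnion_spanningSets, setIntegral_univ] at h
    exact (Complex.continuous_ofReal.tendsto _).comp
      ((Real.continuous_exp.tendsto _).comp h.neg)
  · exact Complex.continuous_ofReal.continuousAt.comp
      (Real.continuous_exp.continuousAt.comp hc.neg)

end CharFun

/-! ### The Kolmogorov extension theorem for real-valued processes -/

section Kolmogorov

/-- Continuity at `∅` of the content on cylinders of `ι → ℝ`. Inner regularity replaces the bases of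
the cylinders by compact sets; a common point of the resulting cylinders is obtained as a limit
along a free ultrafilter, coordinate by coordinate. -/
lemma tendsto_projectiveFamilyContent_zero {ι : Type*} {P : ∀ J : Finset ι, Measure (J → ℝ)}
    [∀ J, IsProbabilityMeasure (P J)] (hP : IsProjectiveMeasureFamily (α := fun _ => ℝ) P)
    {s : ℕ → Set (ι → ℝ)} (hs : ∀ n, s n ∈ measurableCylinders (fun _ : ι => ℝ))
    (hanti : Antitone s) (hempty : ⋂ n, s n = ∅) :
    Tendsto (fun n => projectiveFamilyContent hP (s n)) atTop (𝓝 0) := by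
  rw [ENNReal.tendsto_atTop_zero]
  by_contra! hcon
  obtain ⟨ε, hε, hcon⟩ := hcon
  have hlow : ∀ n, ε < projectiveFamilyContent hP (s n) := by
    intro n
    obtain ⟨k, hk, h⟩ := hcon n
    exact h.trans_le (projectiveFamilyContent_mono hP (hs k) (hs n) (hanti hk))
  obtain ⟨δ, hδ, hδsum⟩ := ENNReal.exists_pos_sum_of_countable' hε.ne' ℕ
  choose J S hS hsJ using fun n => (mem_measurableCylinders _).1 (hs n)
  choose K hKS hK hKlt using fun n =>
    (hS n).exists_isCompact_sdiff_lt (μ := P (J n)) (measure_ne_top _ _) (hδ n).ne'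
  have hmem : ∀ k, cylinder (J k) (S k \ K k) ∈ measurableCylinders (fun _ : ι => ℝ) := fun k =>
    (mem_measurableCylinders _).2 ⟨J k, S k \ K k, (hS k).diff (hK k).measurableSet, rfl⟩
  have hne : ∀ n, ∃ x : ι → ℝ, ∀ k ≤ n, (J k).restrict x ∈ K k := by
    intro n
    by_contra! hno
    have hsub : s n ⊆ ⋃ k ≤ n, cylinder (J k) (S k \ K k) := by
      intro x hx
      obtain ⟨k, hk, hxk⟩ := hno x
      have hxs : x ∈ s k := hanti hk hx
      rw [hsJ k] at hxs
      exact mem_iUnion₂.2 ⟨k, hk, hxs, hxk⟩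
    have hU : (⋃ k ≤ n, cylinder (J k) (S k \ K k)) ∈ measurableCylinders (fun _ : ι => ℝ) := by
      have := isSetRing_measurableCylinders.biUnion_mem (C := measurableCylinders (fun _ : ι => ℝ))
        (Finset.range (n + 1)) (s := fun k => cylinder (J k) (S k \ K k)) (fun k _ => hmem k)
      simpa only [Finset.mem_range, Nat.lt_succ_iff] using this
    have h1 := (projectiveFamilyContent_mono hP (hs n) hU hsub).trans
      (projectiveFamilyContent_iUnion_le hP hmem n)
    have h2 : ∑ k ∈ Finset.range (n + 1), projectiveFamilyContent hP (cylinder (J k) (S k \ K k))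
        ≤ ∑' k, δ k := by
      refine (Finset.sum_le_sum fun k _ => ?_).trans (ENNReal.sum_le_tsum _)
      rw [projectiveFamilyContent_cylinder hP ((hS k).diff (hK k).measurableSet)]
      exact (hKlt k).le
    exact absurd ((hlow n).trans_le (h1.trans h2)) (not_lt.2 hδsum.le)
  choose x hx using hne
  have hlim : ∀ k, ∃ z ∈ K k, Tendsto (fun n => (J k).restrict (x n)) (hyperfilter ℕ) (𝓝 z) := by
    intro k
    obtain ⟨z, hz, h⟩ := (hK k).ultrafilter_le_nhds
      ((hyperfilter ℕ).map fun n => (J k).restrict (x n)) (by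
        rw [Filter.le_principal_iff]
        refine mem_map.2 (Filter.mem_of_superset
          (Nat.hyperfilter_le_atTop (eventually_ge_atTop k)) fun n hn => hx n k hn))
    exact ⟨z, hz, h⟩
  choose z hz hzlim using hlim
  classical
  let y : ι → ℝ := fun i => if h : ∃ l, Tendsto (fun n => x n i) (hyperfilter ℕ) (𝓝 l)
    then h.choose else 0
  have hy : ∀ k, (J k).restrict y = z k := by
    intro k
    ext i
    have h1 : Tendsto (fun n => x n i) (hyperfilter ℕ) (𝓝 (z k i)) :=
      (tendsto_pi_nhds.1 (hzlim k)) i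
    have h2 : ∃ l, Tendsto (fun n => x n i) (hyperfilter ℕ) (𝓝 l) := ⟨_, h1⟩
    change y i = z k i
    simp only [y]
    rw [dif_pos h2]
    exact tendsto_nhds_unique h2.choose_spec h1
  have : y ∈ ⋂ n, s n := by
    refine mem_iInter.2 fun k => ?_
    rw [hsJ k]
    change (J k).restrict y ∈ S k
    rw [hy k]
    exact hKS k (hz k)
  simp [hempty] at this

/-- **Kolmogorov extension theorem** for real-valued processes. -/
theorem exists_isProjectiveLimit_real {ι : Type*} {P : ∀ J : Finset ι, Measure (J → ℝ)}
    [∀ J, IsProbabilityMeasure (P J)] (hP : IsProjectiveMeasureFamily (α := fun _ => ℝ) P) :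
    ∃ μ : Measure (ι → ℝ), IsProjectiveLimit (α := fun _ => ℝ) μ P := by
  have hsub : (projectiveFamilyContent hP).IsSigmaSubadditive :=
    isSigmaSubadditive_of_addContent_iUnion_eq_tsum isSetRing_measurableCylinders
      fun f hf hU hd => addContent_iUnion_eq_sum_of_tendsto_zero isSetRing_measurableCylinders
        (projectiveFamilyContent hP) (fun _ _ => projectiveFamilyContent_ne_top hP)
        (fun _ hs hanti hempty => tendsto_projectiveFamilyContent_zero hP hs hanti hempty)
        hf hU hd
  refine ⟨(projectiveFamilyContent hP).measure isSetSemiring_measurableCylinders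
    generateFrom_measurableCylinders.ge hsub, fun I => ?_⟩
  ext S hS
  rw [Measure.map_apply (by fun_prop) hS]
  have hmem : cylinder I S ∈ measurableCylinders (fun _ : ι => ℝ) :=
    (mem_measurableCylinders _).2 ⟨I, S, hS, rfl⟩
  exact (AddContent.measure_eq (projectiveFamilyContent hP) isSetSemiring_measurableCylinders
    generateFrom_measurableCylinders.symm hsub hmem).trans (projectiveFamilyContent_cylinder hP hS)

end Kolmogorov

/-! ### The stable jump intensity -/

section Stable

/-- The normalizing constant `∫₀^∞ (1 - cos s) s^{-1-p} ds` of the `p`-stable jump intensity. -/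
def stableConst (p : ℝ) : ENNReal :=
  ∫⁻ s in Ioi (0 : ℝ), ENNReal.ofReal (s ^ (-1 - p) * (1 - Real.cos s))

lemma measurable_stableConst : Measurable stableConst := by
  unfold stableConst
  refine Measurable.lintegral_prod_right' (f := fun q : ℝ × ℝ =>
    ENNReal.ofReal (q.2 ^ (-1 - q.1) * (1 - Real.cos q.2))) ?_
  fun_prop

lemma stableConst_ne_top {p : ℝ} (h0 : 0 < p) (h2 : p < 2) : stableConst p ≠ ⊤ := by
  have hi : IntegrableOn (fun s : ℝ => s ^ (-1 - p) * (1 - Real.cos s)) (Ioi 0) := by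
    rw [← Ioc_union_Ioi_eq_Ioi (zero_le_one' ℝ)]
    refine IntegrableOn.union ?_ ?_
    · have h : IntegrableOn (fun s : ℝ => s ^ (1 - p)) (Ioc 0 1) :=
        (intervalIntegrable_iff_integrableOn_Ioc_of_le zero_le_one).1
          (intervalIntegral.intervalIntegrable_rpow' (by linarith))
      refine Integrable.mono' h (by fun_prop) ?_
      refine (ae_restrict_iff' measurableSet_Ioc).2 (Eventually.of_forall fun s hs => ?_)
      have h1 : 0 ≤ 1 - Real.cos s := by linarith [Real.cos_le_one s]
      have h3 : 1 - Real.cos s ≤ s ^ (2 : ℝ) := by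
        have := Real.one_sub_sq_div_two_le_cos (x := s)
        rw [Real.rpow_two]
        nlinarith [sq_nonneg s]
      rw [Real.norm_of_nonneg (mul_nonneg (Real.rpow_nonneg hs.1.le _) h1)]
      calc s ^ (-1 - p) * (1 - Real.cos s) ≤ s ^ (-1 - p) * s ^ (2 : ℝ) :=
            mul_le_mul_of_nonneg_left h3 (Real.rpow_nonneg hs.1.le _)
        _ = s ^ (1 - p) := by rw [← Real.rpow_add hs.1]; ring_nf
    · have h : IntegrableOn (fun s : ℝ => s ^ (-1 - p) * 2) (Ioi 1) :=
        (integrableOn_Ioi_rpow_of_lt (by linarith) one_pos).mul_const 2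
      refine Integrable.mono' h (by fun_prop) ?_
      refine (ae_restrict_iff' measurableSet_Ioi).2 (Eventually.of_forall fun s hs => ?_)
      have hs0 : (0 : ℝ) ≤ s := zero_le_one.trans (le_of_lt hs)
      have h1 : 0 ≤ 1 - Real.cos s := by linarith [Real.cos_le_one s]
      rw [Real.norm_of_nonneg (mul_nonneg (Real.rpow_nonneg hs0 _) h1)]
      exact mul_le_mul_of_nonneg_left (by linarith [Real.neg_one_le_cos s])
        (Real.rpow_nonneg hs0 _)
  exact hi.lintegral_lt_top.ne

lemma stableConst_ne_zero (p : ℝ) : stableConst p ≠ 0 := by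
  have hm : Measurable (fun s : ℝ => ENNReal.ofReal (s ^ (-1 - p) * (1 - Real.cos s))) := by
    fun_prop
  refine ne_of_gt ?_
  unfold stableConst
  rw [setLIntegral_pos_iff hm]
  refine lt_of_lt_of_le ?_ (measure_mono (s := Ioo (0 : ℝ) 1) fun s hs => ⟨?_, hs.1⟩)
  · simp
  · have h : Real.cos s < 1 := by
      have := Real.cos_lt_cos_of_nonneg_of_le_pi le_rfl
        (show s ≤ Real.pi by linarith [hs.2, Real.pi_gt_three]) hs.1
      simpa using this
    have : 0 < s ^ (-1 - p) * (1 - Real.cos s) :=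
      mul_pos (Real.rpow_pos_of_pos hs.1 _) (by linarith)
    simpa using this

/-- Scaling: `∫₀^∞ (1 - cos (s u)) s^{-1-p} ds = |u|^p ∫₀^∞ (1 - cos s) s^{-1-p} ds`. -/
lemma lintegral_stable_scale {p : ℝ} (h0 : 0 < p) (u : ℝ) :
    ∫⁻ s in Ioi (0 : ℝ), ENNReal.ofReal (s ^ (-1 - p) * (1 - Real.cos (s * u)))
      = ENNReal.ofReal (|u| ^ p) * stableConst p := by
  rcases eq_or_ne u 0 with rfl | hu
  · simp [Real.zero_rpow h0.ne']
  have hu' : 0 < |u| := abs_pos.2 hu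
  have himg : (fun s : ℝ => |u| * s) '' Ioi 0 = Ioi 0 := by
    simpa using image_mul_left_Ioi hu' 0
  unfold stableConst
  conv_rhs => rw [← himg]
  rw [lintegral_image_eq_lintegral_abs_deriv_mul measurableSet_Ioi
    (f' := fun _ => |u|) (fun s _ => by
      simpa using ((hasDerivAt_id s).const_mul |u|).hasDerivWithinAt)
    (mul_right_injective₀ hu'.ne').injOn]
  rw [← lintegral_const_mul _ (by fun_prop)]
  refine setLIntegral_congr_fun measurableSet_Ioi fun s hs => ?_
  have hs : 0 < s := hs
  rw [← ENNReal.ofReal_mul (by positivity), ← ENNReal.ofReal_mul (by positivity)]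
  congr 1
  have e1 : Real.cos (|u| * s) = Real.cos (s * u) := by
    rw [← Real.cos_abs (s * u), abs_mul, abs_of_pos hs, mul_comm]
  have e2 : |u| ^ p * (|u| * |u| ^ (-1 - p)) = 1 := by
    rw [← Real.rpow_one_add' hu'.le (by linarith), ← Real.rpow_add hu',
      show p + (1 + (-1 - p)) = 0 by ring, Real.rpow_zero]
  rw [e1, Real.mul_rpow hu'.le hs.le, abs_abs]
  calc s ^ (-1 - p) * (1 - Real.cos (s * u))
      = (|u| ^ p * (|u| * |u| ^ (-1 - p))) * (s ^ (-1 - p) * (1 - Real.cos (s * u))) := by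
        rw [e2, one_mul]
    _ = _ := by ring

end Stable

/-! ### Characteristic functions with multistable exponents -/

section FiniteDimensional

/-- Supplies the continuity at `0` of the exponents `ψ`, which is what Lévy's continuity theorem
needs. -/
lemma continuousAt_zero_of_le_rpow {E : Type*} [NormedAddCommGroup E] {ψ : E → ℝ} {a M : ℝ}
    (ha : 0 < a) (h0 : ∀ t, 0 ≤ ψ t)
    (h : ∀ t, ‖t‖ ≤ 1 → ψ t ≤ ‖t‖ ^ a * M) : ContinuousAt ψ 0 := by
  have hz : ψ 0 = 0 := by
    refine le_antisymm ?_ (h0 0)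
    simpa [Real.zero_rpow ha.ne'] using h 0 (by simp)
  have hlim : Tendsto (fun t : E => ‖t‖ ^ a * M) (𝓝 0) (𝓝 0) := by
    have hc : Continuous (fun t : E => ‖t‖ ^ a * M) :=
      (continuous_norm.rpow_const fun _ => Or.inr ha.le).mul continuous_const
    have := hc.tendsto 0
    simpa [Real.zero_rpow ha.ne'] using this
  rw [ContinuousAt, hz]
  refine squeeze_zero' (Eventually.of_forall h0) ?_ hlim
  filter_upwards [Metric.closedBall_mem_nhds (0 : E) one_pos] with t ht
  exact h t (by simpa using ht)

lemma abs_inner_rpow_le {E : Type*} [NormedAddCommGroup E] [InnerProductSpace ℝ E] {p : ℝ}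
    (hp : 0 ≤ p) (v t : E) :
    |inner ℝ v t| ^ p ≤ ‖t‖ ^ p * ‖v‖ ^ p := by
  rw [← Real.mul_rpow (norm_nonneg _) (norm_nonneg _), mul_comm]
  exact Real.rpow_le_rpow (abs_nonneg _) (abs_real_inner_le_norm v t) hp

variable {E : Type*} [NormedAddCommGroup E] [InnerProductSpace ℝ E] [FiniteDimensional ℝ E]
  [MeasurableSpace E] [BorelSpace E]

lemma integrable_abs_inner_rpow {a : ℝ} (ha : 0 < a) {α : ℝ → ℝ} (hαm : Measurable α)
    (hα : ∀ x, α x ∈ Set.Icc a 2) {F : ℝ → E} (hF : Measurable F)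
    (hFi : Integrable fun x => ‖F x‖ ^ α x) (t : E) :
    Integrable fun x => |inner ℝ (F x) t| ^ α x := by
  have hm : Measurable fun x => |inner ℝ (F x) t| ^ α x := by fun_prop
  refine (hFi.const_mul (max 1 ‖t‖ ^ (2 : ℝ))).mono' hm.aestronglyMeasurable
    (Eventually.of_forall fun x => ?_)
  rw [Real.norm_of_nonneg (by positivity)]
  refine (abs_inner_rpow_le (ha.le.trans (hα x).1) _ _).trans
    (mul_le_mul_of_nonneg_right ?_ (by positivity))
  exact (Real.rpow_le_rpow (norm_nonneg _) (le_max_right 1 _) (ha.le.trans (hα x).1)).trans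
    (Real.rpow_le_rpow_of_exponent_le (le_max_left _ _) (hα x).2)

/-- The part of the exponent over a set where `α < 2`: the jump intensity is the image of
`dx ⊗ C(α(x))⁻¹ s^{-1-α(x)} ds` under `(x, s) ↦ s F(x)`. -/
lemma isCharFun_stable {a : ℝ} (ha : 0 < a) {α : ℝ → ℝ} (hαm : Measurable α)
    (hα : ∀ x, α x ∈ Set.Icc a 2) {F : ℝ → E} (hF : Measurable F)
    (hFi : Integrable fun x => ‖F x‖ ^ α x) {A : Set ℝ} (hA : MeasurableSet A)
    (hA2 : ∀ x ∈ A, α x < 2)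
    (hc : ContinuousAt (fun t : E => ∫ x in A, |inner ℝ (F x) t| ^ α x) 0) :
    IsCharFun (fun t : E => ((Real.exp (-∫ x in A, |inner ℝ (F x) t| ^ α x) : ℝ) : ℂ)) := by
  let w : ℝ × ℝ → ENNReal := fun q =>
    (stableConst (α q.1))⁻¹ * ENNReal.ofReal (q.2 ^ (-1 - α q.1))
  have hw : Measurable w := by
    have := measurable_stableConst
    unfold w
    fun_prop
  have hwtop : ∀ q, w q ≠ ⊤ := fun q =>
    ENNReal.mul_ne_top (ENNReal.inv_ne_top.2 (stableConst_ne_zero _)) ENNReal.ofReal_ne_top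
  let κ : Measure (ℝ × ℝ) :=
    ((volume.restrict A).prod (volume.restrict (Ioi (0 : ℝ)))).withDensity w
  have hσ : SigmaFinite κ := SigmaFinite.withDensity_of_ne_top (Eventually.of_forall hwtop)
  let G : ℝ × ℝ → E := fun q => q.2 • F q.1
  have hG : Measurable G := by unfold G; fun_prop
  have hl : ∀ t : E, ∫⁻ q, ENNReal.ofReal (1 - Real.cos (inner ℝ (G q) t)) ∂κ
      = ∫⁻ x in A, ENNReal.ofReal (|inner ℝ (F x) t| ^ α x) := by
    intro t
    have hm : Measurable fun q => ENNReal.ofReal (1 - Real.cos (inner ℝ (G q) t)) := by fun_prop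
    unfold κ
    rw [lintegral_withDensity_eq_lintegral_mul _ hw hm, lintegral_prod _ (hw.mul hm).aemeasurable]
    refine setLIntegral_congr_fun hA fun x hx => ?_
    have hp : 0 < α x := ha.trans_le (hα x).1
    have hC0 := stableConst_ne_zero (α x)
    have hCt := stableConst_ne_top hp (hA2 x hx)
    have e : ∫⁻ s in Ioi (0 : ℝ), (w * fun q => ENNReal.ofReal (1 - Real.cos (inner ℝ (G q) t)))
          (x, s)
        = ∫⁻ s in Ioi (0 : ℝ), (stableConst (α x))⁻¹ *
          ENNReal.ofReal (s ^ (-1 - α x) * (1 - Real.cos (s * inner ℝ (F x) t))) := by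
      refine setLIntegral_congr_fun measurableSet_Ioi fun s hs => ?_
      have hs : 0 < s := hs
      simp only [Pi.mul_apply, w, G, real_inner_smul_left]
      rw [mul_assoc, ← ENNReal.ofReal_mul (Real.rpow_nonneg hs.le _)]
    calc _ = _ := e
      _ = _ := by
        rw [lintegral_const_mul _ (by fun_prop), lintegral_stable_scale hp, mul_left_comm,
          ENNReal.inv_mul_cancel hC0 hCt, mul_one]
  have hAi : ∀ t : E, Integrable (fun x => |inner ℝ (F x) t| ^ α x) (volume.restrict A) :=
    fun t => (integrable_abs_inner_rpow ha hαm hα hF hFi t).restrict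
  have hnn : ∀ t : E, ∀ q, 0 ≤ 1 - Real.cos (inner ℝ (G q) t) := fun t q => by
    linarith [Real.cos_le_one (inner ℝ (G q) t)]
  have hmeas : ∀ t : E, AEStronglyMeasurable (fun q => 1 - Real.cos (inner ℝ (G q) t)) κ :=
    fun t => (by fun_prop : Measurable _).aestronglyMeasurable
  have hint : ∀ t : E, Integrable (fun q => 1 - Real.cos (inner ℝ (G q) t)) κ := by
    intro t
    rw [← lintegral_ofReal_ne_top_iff_integrable (hmeas t) (Eventually.of_forall (hnn t)), hl]
    exact (hAi t).lintegral_lt_top.ne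
  have heq : ∀ t : E, ∫ q, (1 - Real.cos (inner ℝ (G q) t)) ∂κ
      = ∫ x in A, |inner ℝ (F x) t| ^ α x := by
    intro t
    rw [integral_eq_lintegral_of_nonneg_ae (Eventually.of_forall (hnn t)) (hmeas t), hl,
      integral_eq_lintegral_of_nonneg_ae (Eventually.of_forall fun x => by positivity)
        (hAi t).aestronglyMeasurable]
  have := isCharFun_sigmaFinite κ hG hint (by simpa only [heq] using hc)
  simpa only [heq] using this

lemma tendsto_mul_one_sub_cos (u : ℝ) :
    Tendsto (fun k : ℕ => 2 * ((k : ℝ) + 1) ^ 2 * (1 - Real.cos (((k : ℝ) + 1)⁻¹ * u))) atTop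
      (𝓝 (u ^ 2)) := by
  -- `1 - cos v = 2 sin² (v / 2)`, so the claim is the derivative of `s ↦ sin (s u / 2)` at `0`
  have hd : HasDerivAt (fun s : ℝ => Real.sin (s * (u / 2))) (u / 2) 0 := by
    have := ((hasDerivAt_id (0 : ℝ)).mul_const (u / 2)).sin
    simpa using this
  have hk : Tendsto (fun k : ℕ => ((k : ℝ) + 1)⁻¹) atTop (𝓝[≠] 0) := by
    refine tendsto_nhdsWithin_iff.2 ⟨?_, Eventually.of_forall fun k => ?_⟩
    · simpa using tendsto_one_div_add_atTop_nhds_zero_nat (𝕜 := ℝ)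
    · exact inv_ne_zero (Nat.cast_add_one_ne_zero k)
  have h1 := (hd.tendsto_slope.comp hk).pow 2 |>.const_mul 4
  have e : 4 * (u / 2) ^ 2 = u ^ 2 := by ring
  rw [e] at h1
  refine h1.congr fun k => ?_
  have hk0 : (k : ℝ) + 1 ≠ 0 := Nat.cast_add_one_ne_zero k
  have h2 := Real.cos_sq (((k : ℝ) + 1)⁻¹ * u / 2)
  rw [mul_div_cancel₀ _ (two_ne_zero' ℝ)] at h2
  have h3 := Real.sin_sq_add_cos_sq (((k : ℝ) + 1)⁻¹ * u / 2)
  have h4 : Real.sin (((k : ℝ) + 1)⁻¹ * u / 2) ^ 2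
      = (1 - Real.cos (((k : ℝ) + 1)⁻¹ * u)) / 2 := by linarith
  simp only [Function.comp, slope_def_field, zero_mul, Real.sin_zero, sub_zero, div_inv_eq_mul]
  rw [← mul_div_assoc, mul_pow, h4]
  ring

/-- The Gaussian part of the exponent, approximated by the compound Poisson exponents
`∫ 2 (k + 1)² (1 - cos (⟪F, t⟫ / (k + 1)))`. -/
lemma isCharFun_gaussian {F : ℝ → E} (hF : Measurable F) {B : Set ℝ}
    (hFi : IntegrableOn (fun x => ‖F x‖ ^ 2) B) :
    IsCharFun (fun t : E => ((Real.exp (-∫ x in B, (inner ℝ (F x) t) ^ 2) : ℝ) : ℂ)) := by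
  have hsq : ∀ (t : E) x, (inner ℝ (F x) t) ^ 2 ≤ ‖t‖ ^ 2 * ‖F x‖ ^ 2 := by
    intro t x
    rw [← mul_pow, ← sq_abs, mul_comm]
    exact pow_le_pow_left₀ (abs_nonneg _) (abs_real_inner_le_norm _ _) 2
  have hi : ∀ t : E, Integrable (fun x => (inner ℝ (F x) t) ^ 2) (volume.restrict B) := by
    intro t
    refine (hFi.const_mul (‖t‖ ^ 2)).mono' (by fun_prop) (Eventually.of_forall fun x => ?_)
    rw [Real.norm_of_nonneg (by positivity)]
    exact hsq t x
  have hcos : ∀ v : ℝ, 0 ≤ 1 - Real.cos v := fun v => by linarith [Real.cos_le_one v]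
  have hle : ∀ (k : ℕ) (u : ℝ),
      2 * ((k : ℝ) + 1) ^ 2 * (1 - Real.cos (((k : ℝ) + 1)⁻¹ * u)) ≤ u ^ 2 := by
    intro k u
    have h := Real.one_sub_sq_div_two_le_cos (x := ((k : ℝ) + 1)⁻¹ * u)
    have hk0 : (k : ℝ) + 1 ≠ 0 := Nat.cast_add_one_ne_zero k
    calc _ ≤ 2 * ((k : ℝ) + 1) ^ 2 * ((((k : ℝ) + 1)⁻¹ * u) ^ 2 / 2) :=
          mul_le_mul_of_nonneg_left (by linarith) (by positivity)
      _ = u ^ 2 := by field_simp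
  have hbound : ∀ t : E, ∫ x in B, (inner ℝ (F x) t) ^ 2
      ≤ ‖t‖ ^ (2 : ℝ) * ∫ x in B, ‖F x‖ ^ 2 := by
    intro t
    rw [Real.rpow_two, ← integral_const_mul]
    exact integral_mono (hi t) (hFi.const_mul _) (hsq t)
  have hik : ∀ (k : ℕ) (t : E), Integrable (fun x => 2 * ((k : ℝ) + 1) ^ 2 *
      (1 - Real.cos (((k : ℝ) + 1)⁻¹ * inner ℝ (F x) t))) (volume.restrict B) := by
    intro k t
    refine (hi t).mono' (by fun_prop) (Eventually.of_forall fun x => ?_)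
    rw [Real.norm_of_nonneg (mul_nonneg (by positivity) (hcos _))]
    exact hle k _
  have hcont : ContinuousAt (fun t : E => ∫ x in B, (inner ℝ (F x) t) ^ 2) 0 :=
    continuousAt_zero_of_le_rpow two_pos (fun t => integral_nonneg fun x => by positivity)
      (fun t _ => hbound t)
  refine IsCharFun.of_tendsto (φ := fun k t => ((Real.exp (-∫ x in B, 2 * ((k : ℝ) + 1) ^ 2 *
    (1 - Real.cos (((k : ℝ) + 1)⁻¹ * inner ℝ (F x) t))) : ℝ) : ℂ)) (fun k => ?_) (fun t => ?_) ?_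
  · have hck : ContinuousAt (fun t : E => ∫ x in B, 2 * ((k : ℝ) + 1) ^ 2 *
        (1 - Real.cos (((k : ℝ) + 1)⁻¹ * inner ℝ (F x) t))) 0 :=
      continuousAt_zero_of_le_rpow two_pos
        (fun t => integral_nonneg fun x => mul_nonneg (by positivity) (hcos _))
        (fun t _ => (integral_mono (hik k t) (hi t) fun x => hle k _).trans (hbound t))
    let c : NNReal := 2 * ((k : NNReal) + 1) ^ 2
    have hc : (c : ℝ) = 2 * ((k : ℝ) + 1) ^ 2 := by simp [c]
    have hc0 : (c : ℝ) ≠ 0 := by rw [hc]; positivity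
    have heq : ∀ t : E, ∫ x, (1 - Real.cos (inner ℝ (((k : ℝ) + 1)⁻¹ • F x) t))
        ∂(c • volume.restrict B)
        = ∫ x in B, 2 * ((k : ℝ) + 1) ^ 2 *
          (1 - Real.cos (((k : ℝ) + 1)⁻¹ * inner ℝ (F x) t)) := by
      intro t
      rw [integral_smul_nnreal_measure, integral_const_mul, NNReal.smul_def, hc, smul_eq_mul]
      simp only [real_inner_smul_left]
    have h := isCharFun_sigmaFinite (c • volume.restrict B)
      (G := fun x => ((k : ℝ) + 1)⁻¹ • F x) (by fun_prop) (fun t => ?_)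
      (by simpa only [heq] using hck)
    · simpa only [heq] using h
    · refine Integrable.smul_measure_nnreal ?_
      have := (hik k t).const_mul (c : ℝ)⁻¹
      refine this.congr (Eventually.of_forall fun x => ?_)
      simp only [real_inner_smul_left]
      rw [← hc, inv_mul_cancel_left₀ hc0]
  · refine (Complex.continuous_ofReal.tendsto _).comp
      ((Real.continuous_exp.tendsto _).comp (Tendsto.neg ?_))
    refine tendsto_integral_of_dominated_convergence (fun x => (inner ℝ (F x) t) ^ 2)
      (fun k => (hik k t).aestronglyMeasurable) (hi t) (fun k => Eventually.of_forall fun x => ?_)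
      (Eventually.of_forall fun x => tendsto_mul_one_sub_cos _)
    rw [Real.norm_of_nonneg (mul_nonneg (by positivity) (hcos _))]
    exact hle k _
  · exact Complex.continuous_ofReal.continuousAt.comp
      (Real.continuous_exp.continuousAt.comp hcont.neg)

/-- Existence of the finite-dimensional laws: `exp (-∫ |⟪F, t⟫|^α)` is a characteristic function,
being the product of a Gaussian factor from `{α = 2}` and a factor from `{α < 2}`. -/
lemma isCharFun_multistable {a : ℝ} (ha : 0 < a) {α : ℝ → ℝ} (hαm : Measurable α)
    (hα : ∀ x, α x ∈ Set.Icc a 2) {F : ℝ → E} (hF : Measurable F)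
    (hFi : Integrable fun x => ‖F x‖ ^ α x) :
    IsCharFun (fun t : E => ((Real.exp (-∫ x, |inner ℝ (F x) t| ^ α x) : ℝ) : ℂ)) := by
  have hA : MeasurableSet {x | α x < 2} := measurableSet_lt hαm measurable_const
  have hB : ∀ x ∈ {x | α x < 2}ᶜ, α x = 2 := fun x hx => le_antisymm (hα x).2 (not_lt.1 hx)
  have hi := integrable_abs_inner_rpow ha hαm hα hF hFi
  have hc : ContinuousAt (fun t : E => ∫ x in {x | α x < 2}, |inner ℝ (F x) t| ^ α x) 0 := by
    refine continuousAt_zero_of_le_rpow (M := ∫ x in {x | α x < 2}, ‖F x‖ ^ α x) ha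
      (fun t => integral_nonneg fun x => by positivity) (fun t ht => ?_)
    rw [← integral_const_mul]
    refine integral_mono (hi t).restrict (hFi.restrict.const_mul _) fun x => ?_
    refine (abs_inner_rpow_le (ha.le.trans (hα x).1) _ _).trans
      (mul_le_mul_of_nonneg_right ?_ (by positivity))
    exact Real.rpow_le_rpow_of_exponent_ge' (norm_nonneg _) ht ha.le (hα x).1
  have hFB : IntegrableOn (fun x => ‖F x‖ ^ 2) {x | α x < 2}ᶜ :=
    hFi.integrableOn.congr_fun (fun x hx => by simp only [hB x hx, Real.rpow_two]) hA.compl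
  have h := (isCharFun_stable ha hαm hα hF hFi hA (fun x hx => hx) hc).mul
    (isCharFun_gaussian hF hFB)
  convert h using 2 with t
  rw [← Complex.ofReal_mul, ← Real.exp_add, ← integral_add_compl hA (hi t), neg_add]
  congr 4
  refine setIntegral_congr_fun hA.compl fun x hx => ?_
  simp only [hB x hx, Real.rpow_two, sq_abs]

end FiniteDimensional

/-! ### Finite-dimensional laws of the integral -/

section Laws

/-- Every `f ∈ F_α` has finite modular `∫ |f|^α`: if the modular of `f / c` is `1`, that of `f` is at
most `max 1 c ^ 2`. A modular equal to `1` is not the junk value `0`, so it is integrable. -/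
lemma MemFalpha.integrable {a : ℝ} (ha : 0 < a) {α : ℝ → ℝ} (hαm : Measurable α)
    (hα : ∀ x, α x ∈ Set.Icc a 2) {f : ℝ → ℝ} (hf : MemFalpha α f) :
    Integrable fun x => |f x| ^ α x := by
  obtain ⟨hfm, h0 | ⟨c, hc, h⟩⟩ := hf
  · refine (integrable_zero ℝ ℝ volume).congr ?_
    filter_upwards [h0] with x hx
    simp [hx, Real.zero_rpow (ha.trans_le (hα x).1).ne']
  · have hi : Integrable fun x => |f x / c| ^ α x := by
      by_contra hn
      rw [integral_undef hn] at h
      exact zero_ne_one h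
    have hm : Measurable fun x => |f x| ^ α x := by fun_prop
    refine (hi.const_mul (max 1 c ^ (2 : ℝ))).mono' hm.aestronglyMeasurable
      (Eventually.of_forall fun x => ?_)
    have hx : 0 ≤ α x := ha.le.trans (hα x).1
    rw [Real.norm_of_nonneg (by positivity)]
    have e : |f x| ^ α x = c ^ α x * |f x / c| ^ α x := by
      rw [← Real.mul_rpow hc.le (abs_nonneg _), abs_div, abs_of_pos hc, mul_div_cancel₀ _ hc.ne']
    rw [e]
    refine mul_le_mul_of_nonneg_right ?_ (by positivity)
    exact (Real.rpow_le_rpow hc.le (le_max_right 1 _) hx).trans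
      (Real.rpow_le_rpow_of_exponent_le (le_max_left _ _) (hα x).2)

/-- The vector `F = (f i)ᵢ` satisfies the integrability hypothesis of `isCharFun_multistable`, since
`‖F x‖ ≤ N maxᵢ |f i x|`. -/
lemma integrable_norm_rpow_toLp {a : ℝ} (ha : 0 < a) {α : ℝ → ℝ} (hαm : Measurable α)
    (hα : ∀ x, α x ∈ Set.Icc a 2) {ι : Type*} [Fintype ι] {f : ι → ℝ → ℝ}
    (hf : ∀ i, MemFalpha α (f i)) :
    Integrable fun x => ‖(WithLp.toLp 2 fun i => f i x : EuclideanSpace ℝ ι)‖ ^ α x := by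
  have hfm : ∀ i, Measurable (f i) := fun i => (hf i).1
  have hF : Measurable fun x => (WithLp.toLp 2 fun i => f i x : EuclideanSpace ℝ ι) := by
    fun_prop
  have hm : Measurable fun x => ‖(WithLp.toLp 2 fun i => f i x : EuclideanSpace ℝ ι)‖ ^ α x := by
    fun_prop
  let N : ℝ := max 1 (Fintype.card ι)
  have hN : 1 ≤ N := le_max_left _ _
  refine ((integrable_finsetSum Finset.univ fun i _ =>
    (hf i).integrable ha hαm hα).const_mul (N ^ (2 : ℝ))).mono' hm.aestronglyMeasurable
      (Eventually.of_forall fun x => ?_)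
  have hx : 0 < α x := ha.trans_le (hα x).1
  rw [Real.norm_of_nonneg (by positivity)]
  rcases isEmpty_or_nonempty ι with hι | hι
  · rw [EuclideanSpace.norm_eq]
    simp [Real.zero_rpow hx.ne']
  obtain ⟨i, hi⟩ := Finite.exists_max fun i => |f i x|
  have hle : ‖(WithLp.toLp 2 fun i => f i x : EuclideanSpace ℝ ι)‖ ≤ N * |f i x| := by
    have hsq : ‖(WithLp.toLp 2 fun i => f i x : EuclideanSpace ℝ ι)‖ ^ 2 ≤ (N * |f i x|) ^ 2 := by
      rw [EuclideanSpace.norm_sq_eq]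
      calc ∑ j, ‖f j x‖ ^ 2 ≤ ∑ _j : ι, |f i x| ^ 2 :=
            Finset.sum_le_sum fun j _ => pow_le_pow_left₀ (norm_nonneg _) (hi j) 2
        _ = (Fintype.card ι : ℝ) * |f i x| ^ 2 := by simp
        _ ≤ N ^ 2 * |f i x| ^ 2 := by
            refine mul_le_mul_of_nonneg_right ?_ (by positivity)
            exact (le_max_right 1 _).trans (by nlinarith [hN])
        _ = _ := by ring
    exact (sq_le_sq₀ (norm_nonneg _) (by positivity)).1 hsq
  calc _ ≤ (N * |f i x|) ^ α x := Real.rpow_le_rpow (norm_nonneg _) hle hx.le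
    _ = N ^ α x * |f i x| ^ α x := Real.mul_rpow (by positivity) (abs_nonneg _)
    _ ≤ N ^ (2 : ℝ) * ∑ j, |f j x| ^ α x :=
        mul_le_mul (Real.rpow_le_rpow_of_exponent_le hN (hα x).2)
          (Finset.single_le_sum (f := fun j => |f j x| ^ α x) (fun j _ => by positivity)
            (Finset.mem_univ i)) (by positivity) (by positivity)

lemma measurable_cexp_sum {ι : Type*} [Fintype ι] (θ : ι → ℝ) :
    Measurable fun y : ι → ℝ => Complex.exp (Complex.I * ((∑ i, θ i * y i : ℝ) : ℂ)) := by
  fun_prop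

/-- The finite-dimensional law of `(I(f i))ᵢ`, as a measure on `ι → ℝ`. -/
lemma exists_law {a : ℝ} (ha : 0 < a) {α : ℝ → ℝ} (hαm : Measurable α)
    (hα : ∀ x, α x ∈ Set.Icc a 2) {ι : Type*} [Fintype ι] {f : ι → ℝ → ℝ}
    (hf : ∀ i, MemFalpha α (f i)) :
    ∃ P : Measure (ι → ℝ), IsProbabilityMeasure P ∧ ∀ θ : ι → ℝ,
      ∫ y, Complex.exp (Complex.I * ((∑ i, θ i * y i : ℝ) : ℂ)) ∂P =
        ((Real.exp (-(∫ x : ℝ, |∑ i, θ i * f i x| ^ α x)) : ℝ) : ℂ) := by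
  have hfm : ∀ i, Measurable (f i) := fun i => (hf i).1
  have hF : Measurable fun x => (WithLp.toLp 2 fun i => f i x : EuclideanSpace ℝ ι) := by
    fun_prop
  obtain ⟨μ, hμ, h⟩ := isCharFun_multistable ha hαm hα hF
    (integrable_norm_rpow_toLp ha hαm hα hf)
  have hof : Measurable (WithLp.ofLp : EuclideanSpace ℝ ι → ι → ℝ) := by fun_prop
  refine ⟨μ.map WithLp.ofLp, Measure.isProbabilityMeasure_map hof.aemeasurable, fun θ => ?_⟩
  rw [integral_map hof.aemeasurable (measurable_cexp_sum θ).aestronglyMeasurable]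
  have := h (WithLp.toLp 2 θ)
  simp only [charFun_apply, PiLp.inner_apply, RCLike.inner_apply, conj_trivial] at this
  rw [← this]
  refine integral_congr_ae (Eventually.of_forall fun y => ?_)
  simp only
  rw [mul_comm]

/-- A finite measure on `ι → ℝ`, `ι` finite, is determined by its characteristic function. -/
lemma ext_of_integral_cexp {ι : Type*} [Fintype ι] {P Q : Measure (ι → ℝ)} [IsFiniteMeasure P]
    [IsFiniteMeasure Q]
    (h : ∀ θ : ι → ℝ, ∫ y, Complex.exp (Complex.I * ((∑ i, θ i * y i : ℝ) : ℂ)) ∂P =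
      ∫ y, Complex.exp (Complex.I * ((∑ i, θ i * y i : ℝ) : ℂ)) ∂Q) : P = Q := by
  refine (MeasurableEquiv.toLp 2 (ι → ℝ)).map_measurableEquiv_injective ?_
  refine Measure.ext_of_charFun (funext fun t => ?_)
  have key : ∀ ρ : Measure (ι → ℝ), charFun (ρ.map (MeasurableEquiv.toLp 2 (ι → ℝ))) t
      = ∫ y, Complex.exp (Complex.I * ((∑ i, t i * y i : ℝ) : ℂ)) ∂ρ := by
    intro ρ
    rw [charFun_apply, integral_map_equiv]
    refine integral_congr_ae (Eventually.of_forall fun y => ?_)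
    simp only [PiLp.inner_apply, RCLike.inner_apply, conj_trivial, MeasurableEquiv.coe_toLp]
    rw [mul_comm]
  rw [key, key, h]

end Laws

/-! ### The multistable integral -/

/-- existence of the α(x)-multistable integral `I(f)`, `f ∈ F_α`, as a
family of random variables on some probability space, with the prescribed
finite-dimensional characteristic functions. -/
theorem multistable_integral_exists (a : ℝ) (ha : 0 < a)
    (α : ℝ → ℝ) (hαm : Measurable α) (hα : ∀ x, α x ∈ Set.Icc a 2) :
    ∃ (Ω : Type) (_ : MeasurableSpace Ω) (P : Measure Ω), IsProbabilityMeasure P ∧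
      ∃ I : (ℝ → ℝ) → Ω → ℝ,
        (∀ f, MemFalpha α f → Measurable (I f)) ∧
        ∀ (d : ℕ) (f : Fin d → ℝ → ℝ), (∀ j, MemFalpha α (f j)) →
          ∀ θ : Fin d → ℝ,
            ∫ ω, Complex.exp (Complex.I * ((∑ j, θ j * I (f j) ω : ℝ) : ℂ)) ∂P =
              ((Real.exp (-(∫ x : ℝ, |∑ j, θ j * f j x| ^ α x)) : ℝ) : ℂ) := by
  classical
  choose P hPprob hP using fun J : Finset {f // MemFalpha α f} =>
    exists_law ha hαm hα (ι := J) (f := fun j => j.1.1) (fun j => j.1.2)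
  have hproj : IsProjectiveMeasureFamily (α := fun _ : {f // MemFalpha α f} => ℝ) P := by
    intro J K hKJ
    have hr : Measurable (Finset.restrict₂ (π := fun _ : {f // MemFalpha α f} => ℝ) hKJ) :=
      Finset.measurable_restrict₂ hKJ
    have : IsProbabilityMeasure ((P J).map
        (Finset.restrict₂ (π := fun _ : {f // MemFalpha α f} => ℝ) hKJ)) :=
      Measure.isProbabilityMeasure_map hr.aemeasurable
    refine ext_of_integral_cexp fun θ => ?_
    -- a frequency vector on `K` is extended by `0` to `J`
    let θ' : J → ℝ := fun j => if h : j.1 ∈ K then θ ⟨j.1, h⟩ else 0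
    have hsum : ∀ g : {f // MemFalpha α f} → ℝ, ∑ j : J, θ' j * g j.1 = ∑ k : K, θ k * g k.1 := by
      intro g
      let ψ : {f // MemFalpha α f} → ℝ := fun i => if h : i ∈ K then θ ⟨i, h⟩ else 0
      have e1 : ∑ j : J, θ' j * g j.1 = ∑ i ∈ J, ψ i * g i :=
        Finset.sum_coe_sort J fun i => ψ i * g i
      have e2 : ∑ k : K, θ k * g k.1 = ∑ i ∈ K, ψ i * g i := by
        rw [← Finset.sum_coe_sort K fun i => ψ i * g i]
        exact Finset.sum_congr rfl fun k _ => by simp [ψ]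
      rw [e1, e2]
      exact (Finset.sum_subset hKJ fun i _ hi => by simp [ψ, hi]).symm
    rw [integral_map hr.aemeasurable (measurable_cexp_sum θ).aestronglyMeasurable, hP K θ]
    have hx : ∀ x : ℝ, ∑ k : K, θ k * k.1.1 x = ∑ j : J, θ' j * j.1.1 x := fun x =>
      (hsum fun i => i.1 x).symm
    simp only [hx]
    rw [← hP J θ']
    refine integral_congr_ae (Eventually.of_forall fun y => ?_)
    have := hsum fun i => if h : i ∈ J then y ⟨i, h⟩ else 0
    simp only [Finset.coe_mem, dif_pos, Subtype.coe_eta] at this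
    simp only
    rw [this]
    congr 3
    refine Finset.sum_congr rfl fun k _ => ?_
    rw [dif_pos (hKJ k.2)]
    rfl
  obtain ⟨μ, hμ⟩ := exists_isProjectiveLimit_real hproj
  refine ⟨{f // MemFalpha α f} → ℝ, inferInstance, μ, hμ.isProbabilityMeasure,
    fun f ω => if h : MemFalpha α f then ω ⟨f, h⟩ else 0, fun f hf => ?_, fun d f hf θ => ?_⟩
  · simp only [dif_pos hf]
    exact measurable_pi_apply _
  -- the functions `f j` need not be distinct: frequencies of equal functions are added up
  let F : Fin d → {f // MemFalpha α f} := fun j => ⟨f j, hf j⟩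
  let J : Finset {f // MemFalpha α f} := Finset.univ.image F
  let θ' : J → ℝ := fun i => ∑ j with F j = i.1, θ j
  have hsum : ∀ g : {f // MemFalpha α f} → ℝ, ∑ i : J, θ' i * g i.1 = ∑ j, θ j * g (F j) := by
    intro g
    have e1 : ∑ i : J, θ' i * g i.1 = ∑ i ∈ J, (∑ j with F j = i, θ j) * g i :=
      Finset.sum_coe_sort J fun i => (∑ j with F j = i, θ j) * g i
    rw [e1, ← Finset.sum_fiberwise_of_maps_to
      (fun j _ => Finset.mem_image_of_mem F (Finset.mem_univ j)) fun j => θ j * g (F j)]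
    refine Finset.sum_congr rfl fun i _ => ?_
    rw [Finset.sum_mul]
    refine Finset.sum_congr rfl fun j hj => ?_
    rw [(Finset.mem_filter.1 hj).2]
  have h := hP J θ'
  rw [← hμ J, integral_map (by fun_prop)
    (measurable_cexp_sum θ').aestronglyMeasurable] at h
  have hx : ∀ x : ℝ, ∑ i : J, θ' i * i.1.1 x = ∑ j, θ j * f j x := fun x =>
    hsum fun i => i.1 x
  have hω : ∀ ω : {f // MemFalpha α f} → ℝ,
      ∑ i : J, θ' i * J.restrict ω i = ∑ j, θ j * ω (F j) := fun ω => hsum ω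
  simp only [hx, hω] at h
  simpa only [dif_pos (hf _)] using h
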